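/- Let q > 1, n ≥ 2, and let a_1 ≥ a_2 ≥ … ≥ a_n ≥ 0 be real numbers, not all zero, and let N(x) = (a_1 (x_1^*)^q + … + a_n (x_n^*)^q)^{1/q} be the norm of ℓ_{w,q}^n. Then the following are equivalent: (i) a_1 = a_2 = … = a_n; (ii) the space (ℝ^n, N) is smooth, i.e., for every x ∈ ℝ^n with x ≠ 0 there exists exactly one linear functional f : ℝ^n → ℝ with f(x) = N(x) and f(y) ≤ N(y) for all y ∈ ℝ^n. -/

import Mathlib

/-!
For weights `w ≥ 0` write `‖x‖_{w,q} = (∑ w i * |x i| ^ q) ^ (1 / q)`. By Hölder's inequality the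
derivative of `‖·‖_{w,q}` at `x` supports `‖·‖_{w,q}` at `x`; conversely, every functional touching
a function from below at a point of differentiability is the derivative there.

If all weights equal `c > 0`, the Lorentz norm is `‖·‖_{c,q}`, so that the supporting functional at
any nonzero point is the derivative.

For general decreasing weights the rearrangement inequality gives `‖·‖_{w ∘ σ,q} ≤ N` for every
permutation `σ`, with equality at `(1, …, 1)`. The derivatives of all the `‖·‖_{w ∘ σ,q}` at this
point thus support `N` there; the `i`-th coefficient is proportional to `w (σ i)`, so if the
supporting functional is unique, all the weights are equal.
-/

/-- The non-increasing rearrangement of `(|x 0|, …, |x (n-1)|)`. -/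
noncomputable def dstar {n : ℕ} (x : Fin n → ℝ) : Fin n → ℝ :=
  fun i => |x (Tuple.sort (fun j => -|x j|) i)|

section Support

variable {E : Type*} [AddCommGroup E] [Module ℝ E] {M N : E → ℝ} {x v : E} {f : E →ₗ[ℝ] ℝ}

/-- `f` is a supporting functional of `N` at `x`. The function `N` is arbitrary, so that the notion
applies before anything has been shown to be a norm. -/
def IsSupportingAt (N : E → ℝ) (x : E) (f : E →ₗ[ℝ] ℝ) : Prop :=
  f x = N x ∧ ∀ y, f y ≤ N y

/-- Smoothness of the norm `N`: uniqueness (and existence) of the supporting functional at each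
nonzero point. -/
def IsSmoothNorm (N : E → ℝ) : Prop :=
  ∀ x ≠ 0, ∃! f : E →ₗ[ℝ] ℝ, IsSupportingAt N x f

theorem IsSupportingAt.mono (hf : IsSupportingAt M x f) (hMN : ∀ y, M y ≤ N y) (hx : M x = N x) :
    IsSupportingAt N x f :=
  ⟨hf.1.trans hx, fun y => (hf.2 y).trans (hMN y)⟩

theorem IsSupportingAt.apply_eq_of_hasLineDerivAt {N' : ℝ} (hf : IsSupportingAt N x f)
    (hN : HasLineDerivAt ℝ N N' x v) : f v = N' := by
  have hmin : IsLocalMin (fun t : ℝ => N (x + t • v) - f (x + t • v)) 0 := by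
    refine Filter.Eventually.of_forall fun t => ?_
    simpa only [zero_smul, add_zero, hf.1, sub_self, sub_nonneg] using hf.2 (x + t • v)
  have hf' : HasDerivAt (fun t : ℝ => f (x + t • v)) (f v) 0 := by
    simpa only [map_add, map_smul, smul_eq_mul, id_eq, one_mul] using
      ((hasDerivAt_id (0 : ℝ)).mul_const (f v)).const_add (f x)
  exact (sub_eq_zero.mp (hmin.hasDerivAt_eq_zero (hN.sub hf'))).symm

end Support

section WeightedLp

variable {ι : Type*} [Fintype ι] {w x : ι → ℝ} {q : ℝ}

/-- The `ℓ_q` norm with weights `w`, a seminorm if `0 ≤ w` and `1 ≤ q`. -/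
noncomputable def weightedLpNorm (w : ι → ℝ) (q : ℝ) (x : ι → ℝ) : ℝ :=
  (∑ i, w i * |x i| ^ q) ^ (1 / q)

/-- The derivative of `weightedLpNorm w q` at `x` (for `1 < q`, where the sum is positive), used as
a supporting functional. The factor `|x i| ^ (q - 2) * x i` encodes `sign (x i) * |x i| ^ (q - 1)`,
also for `x i = 0`. -/
noncomputable def weightedLpGradient (w : ι → ℝ) (q : ℝ) (x : ι → ℝ) : (ι → ℝ) →ₗ[ℝ] ℝ :=
  (∑ i, w i * |x i| ^ q) ^ (1 / q - 1) •
    ∑ i, (w i * (|x i| ^ (q - 2) * x i)) • LinearMap.proj i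

theorem weightedLpGradient_apply (w : ι → ℝ) (q : ℝ) (x y : ι → ℝ) :
    weightedLpGradient w q x y =
      (∑ i, w i * |x i| ^ q) ^ (1 / q - 1) * ∑ i, w i * (|x i| ^ (q - 2) * x i) * y i := by
  simp [weightedLpGradient]

theorem abs_rpow_sub_two_mul_self_mul (q s t : ℝ) :
    |s| ^ (q - 2) * s * t = |s| ^ q * (t / s) := by
  rcases eq_or_ne s 0 with rfl | hs
  · simp
  · rw [Real.rpow_sub (abs_pos.mpr hs), Real.rpow_two, sq_abs]
    field_simp

theorem abs_rpow_sub_two_mul_self_mul_self (hq : q ≠ 0) (s : ℝ) :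
    |s| ^ (q - 2) * s * s = |s| ^ q := by
  rw [abs_rpow_sub_two_mul_self_mul]
  rcases eq_or_ne s 0 with rfl | hs
  · simp [Real.zero_rpow hq]
  · rw [div_self hs, mul_one]

theorem weightedLpGradient_apply_self (hq : q ≠ 0) (hx : 0 < ∑ i, w i * |x i| ^ q) :
    weightedLpGradient w q x x = weightedLpNorm w q x := by
  simp only [weightedLpGradient_apply, weightedLpNorm, mul_assoc (w _),
    abs_rpow_sub_two_mul_self_mul_self hq]
  rw [Real.rpow_sub_one hx.ne', div_mul_cancel₀ _ hx.ne']

theorem abs_rpow_mul_abs_div_rpow_le (hq : 0 ≤ q) (s t : ℝ) : |s| ^ q * |t / s| ^ q ≤ |t| ^ q := by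
  rw [← Real.mul_rpow (abs_nonneg _) (abs_nonneg _), ← abs_mul]
  gcongr ?_ ^ q
  rcases eq_or_ne s 0 with rfl | hs
  · simp
  · rw [mul_div_cancel₀ _ hs]

theorem sum_mul_abs_rpow_mul_le (hq : 1 ≤ q) (hw : ∀ i, 0 ≤ w i) (x y : ι → ℝ) :
    ∑ i, w i * (|x i| ^ (q - 2) * x i) * y i ≤
      (∑ i, w i * |x i| ^ q) ^ (1 - 1 / q) * weightedLpNorm w q y := by
  have hweight (i : ι) : 0 ≤ w i * |x i| ^ q := mul_nonneg (hw i) (by positivity)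
  have hratio : ∑ i, w i * |x i| ^ q * |y i / x i| ^ q ≤ ∑ i, w i * |y i| ^ q := by
    refine Finset.sum_le_sum fun i _ => ?_
    rw [mul_assoc]
    exact mul_le_mul_of_nonneg_left (abs_rpow_mul_abs_div_rpow_le (by linarith) _ _) (hw i)
  calc ∑ i, w i * (|x i| ^ (q - 2) * x i) * y i
      = ∑ i, w i * |x i| ^ q * (y i / x i) := by
        simp only [mul_assoc (w _), abs_rpow_sub_two_mul_self_mul]
    _ ≤ ∑ i, w i * |x i| ^ q * |y i / x i| :=
        Finset.sum_le_sum fun i _ => mul_le_mul_of_nonneg_left (le_abs_self _) (hweight i)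
    _ ≤ (∑ i, w i * |x i| ^ q) ^ (1 - q⁻¹) * (∑ i, w i * |x i| ^ q * |y i / x i| ^ q) ^ q⁻¹ :=
        Real.inner_le_weight_mul_Lp_of_nonneg _ hq _ _ hweight fun i => abs_nonneg _
    _ ≤ (∑ i, w i * |x i| ^ q) ^ (1 - 1 / q) * weightedLpNorm w q y := by
        rw [weightedLpNorm, one_div]
        have hsum : 0 ≤ ∑ i, w i * |x i| ^ q * |y i / x i| ^ q :=
          Finset.sum_nonneg fun i _ => mul_nonneg (hweight i) (by positivity)
        exact mul_le_mul_of_nonneg_left (Real.rpow_le_rpow hsum hratio (by positivity))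
          (Real.rpow_nonneg (Finset.sum_nonneg fun i _ => hweight i) _)

theorem isSupportingAt_weightedLpGradient (hq : 1 ≤ q) (hw : ∀ i, 0 ≤ w i)
    (hx : 0 < ∑ i, w i * |x i| ^ q) :
    IsSupportingAt (weightedLpNorm w q) x (weightedLpGradient w q x) := by
  refine ⟨weightedLpGradient_apply_self (by linarith) hx, fun y => ?_⟩
  calc weightedLpGradient w q x y
      ≤ (∑ i, w i * |x i| ^ q) ^ (1 / q - 1) *
          ((∑ i, w i * |x i| ^ q) ^ (1 - 1 / q) * weightedLpNorm w q y) := by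
        rw [weightedLpGradient_apply]
        gcongr
        exact sum_mul_abs_rpow_mul_le hq hw x y
    _ = weightedLpNorm w q y := by
        rw [← mul_assoc, ← Real.rpow_add hx, sub_add_sub_cancel, sub_self, Real.rpow_zero, one_mul]

theorem hasLineDerivAt_weightedLpNorm (hq : 1 < q) (hx : 0 < ∑ i, w i * |x i| ^ q) (v : ι → ℝ) :
    HasLineDerivAt ℝ (weightedLpNorm w q) (weightedLpGradient w q x v) x v := by
  have hcoord (i : ι) : HasDerivAt (fun t : ℝ => x i + t * v i) (v i) 0 := by
    simpa using ((hasDerivAt_id (0 : ℝ)).mul_const (v i)).const_add (x i)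
  have hterm (i : ι) : HasDerivAt (fun t : ℝ => w i * |x i + t * v i| ^ q)
      (w i * (q * |x i| ^ (q - 2) * x i * v i)) 0 := by
    have habs : HasDerivAt (fun s : ℝ => |s| ^ q) (q * |x i| ^ (q - 2) * x i) (x i + 0 * v i) := by
      simpa using hasDerivAt_abs_rpow (x i) hq
    exact (habs.comp (0 : ℝ) (hcoord i)).const_mul (w i)
  have hsum := (HasDerivAt.fun_sum fun i (_ : i ∈ Finset.univ) => hterm i).rpow_const
    (p := 1 / q) (Or.inl (by simpa using hx.ne'))
  refine hsum.congr_deriv ?_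
  have hq0 : q ≠ 0 := by linarith
  rw [weightedLpGradient_apply, mul_comm, Finset.sum_mul]
  simp only [zero_mul, add_zero]
  refine congrArg _ (Finset.sum_congr rfl fun i _ => ?_)
  field_simp

theorem sum_mul_abs_rpow_pos (hw : ∀ i, 0 < w i) (hx : x ≠ 0) (q : ℝ) :
    0 < ∑ i, w i * |x i| ^ q := by
  obtain ⟨i, hi⟩ := Function.ne_iff.mp hx
  exact Finset.sum_pos' (fun j _ => mul_nonneg (hw j).le (by positivity))
    ⟨i, Finset.mem_univ i, mul_pos (hw i) (Real.rpow_pos_of_pos (abs_pos.mpr hi) q)⟩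

theorem isSmoothNorm_weightedLpNorm (hq : 1 < q) (hw : ∀ i, 0 < w i) :
    IsSmoothNorm (weightedLpNorm w q) := by
  intro x hx
  have hsum := sum_mul_abs_rpow_pos hw hx q
  exact ⟨weightedLpGradient w q x,
    isSupportingAt_weightedLpGradient hq.le (fun i => (hw i).le) hsum,
    fun f hf => LinearMap.ext fun v =>
      hf.apply_eq_of_hasLineDerivAt (hasLineDerivAt_weightedLpNorm hq hsum v)⟩

theorem weightedLpGradient_one_apply_single [DecidableEq ι] (w : ι → ℝ) (q : ℝ) (i : ι) :
    weightedLpGradient w q 1 (Pi.single i 1) = (∑ j, w j) ^ (1 / q - 1) * w i := by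
  simp [weightedLpGradient_apply, Pi.single_apply]

end WeightedLp

section Lorentz

variable {n : ℕ} {w : Fin n → ℝ} {q : ℝ}

/-- The norm of the Lorentz space `ℓ_{w,q}^n`, for weights indexed from `0`. -/
noncomputable def lorentzNorm (w : Fin n → ℝ) (q : ℝ) (x : Fin n → ℝ) : ℝ :=
  (∑ i, w i * dstar x i ^ q) ^ (1 / q)

theorem antitone_dstar (x : Fin n → ℝ) : Antitone (dstar x) := fun _ _ hij =>
  neg_le_neg_iff.mp (Tuple.monotone_sort (fun j => -|x j|) hij)

theorem lorentzNorm_const (c q : ℝ) (x : Fin n → ℝ) :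
    lorentzNorm (fun _ => c) q x = weightedLpNorm (fun _ => c) q x :=
  congrArg (· ^ (1 / q)) (Equiv.sum_comp (Tuple.sort fun j => -|x j|) fun i => c * |x i| ^ q)

theorem sum_comp_perm_mul_abs_rpow_le (hq : 0 ≤ q) (hw : Antitone w) (σ : Equiv.Perm (Fin n))
    (x : Fin n → ℝ) : ∑ i, w (σ i) * |x i| ^ q ≤ ∑ i, w i * dstar x i ^ q := by
  have hpow : Antitone fun i => dstar x i ^ q := fun _ _ hij =>
    Real.rpow_le_rpow (abs_nonneg _) (antitone_dstar x hij) hq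
  let τ := Tuple.sort fun j => -|x j|
  calc ∑ i, w (σ i) * |x i| ^ q
      = ∑ i, w ((τ.trans σ) i) * dstar x i ^ q :=
        (Equiv.sum_comp τ fun i => w (σ i) * |x i| ^ q).symm
    _ ≤ ∑ i, w i * dstar x i ^ q := (hw.monovary hpow).sum_comp_perm_mul_le_sum_mul

theorem weightedLpNorm_comp_perm_le_lorentzNorm (hq : 0 ≤ q) (hw : Antitone w)
    (hw0 : ∀ i, 0 ≤ w i) (σ : Equiv.Perm (Fin n)) (x : Fin n → ℝ) :
    weightedLpNorm (w ∘ σ) q x ≤ lorentzNorm w q x :=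
  Real.rpow_le_rpow (Finset.sum_nonneg fun i _ => mul_nonneg (hw0 (σ i)) (by positivity))
    (sum_comp_perm_mul_abs_rpow_le hq hw σ x) (by positivity)

theorem weightedLpNorm_comp_perm_one (w : Fin n → ℝ) (q : ℝ) (σ : Equiv.Perm (Fin n)) :
    weightedLpNorm (w ∘ σ) q 1 = lorentzNorm w q 1 := by
  simp [weightedLpNorm, lorentzNorm, dstar, Equiv.sum_comp σ w]

theorem isSupportingAt_lorentzNorm_one (hq : 1 ≤ q) (hw : Antitone w) (hw0 : ∀ i, 0 ≤ w i)
    (hsum : 0 < ∑ i, w i) (σ : Equiv.Perm (Fin n)) :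
    IsSupportingAt (lorentzNorm w q) 1 (weightedLpGradient (w ∘ σ) q 1) :=
  (isSupportingAt_weightedLpGradient hq (fun i => hw0 (σ i))
    (by simpa [Equiv.sum_comp σ w] using hsum)).mono
    (weightedLpNorm_comp_perm_le_lorentzNorm (by linarith) hw hw0 σ)
    (weightedLpNorm_comp_perm_one w q σ)

theorem weights_eq_of_existsUnique_isSupportingAt_one (hq : 1 ≤ q) (hw : Antitone w)
    (hw0 : ∀ i, 0 ≤ w i) (hsum : 0 < ∑ i, w i)
    (huniq : ∃! f, IsSupportingAt (lorentzNorm w q) 1 f) (i j : Fin n) : w i = w j := by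
  have hsupp := isSupportingAt_lorentzNorm_one hq hw hw0 hsum
  have hgrad : weightedLpGradient (w ∘ Equiv.refl _) q 1 =
      weightedLpGradient (w ∘ Equiv.swap i j) q 1 :=
    huniq.unique (hsupp (Equiv.refl _)) (hsupp (Equiv.swap i j))
  have hcoeff := LinearMap.congr_fun hgrad (Pi.single i 1)
  simp only [weightedLpGradient_one_apply_single, Function.comp_apply, Equiv.sum_comp,
    Equiv.refl_apply, Equiv.swap_apply_left] at hcoeff
  exact mul_left_cancel₀ (Real.rpow_pos_of_pos hsum _).ne' hcoeff

theorem isSmoothNorm_lorentzNorm_iff (hq : 1 < q) (hw : Antitone w) (hw0 : ∀ i, 0 ≤ w i)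
    (hne : w ≠ 0) :
    IsSmoothNorm (lorentzNorm w q) ↔ ∀ i j, w i = w j := by
  obtain ⟨m, hm⟩ := Function.ne_iff.mp hne
  have hmpos : 0 < w m := lt_of_le_of_ne (hw0 m) hm.symm
  refine ⟨fun hsmooth => ?_, fun hconst => ?_⟩
  · have hone : (1 : Fin n → ℝ) ≠ 0 := Function.ne_iff.mpr ⟨m, one_ne_zero⟩
    exact weights_eq_of_existsUnique_isSupportingAt_one hq.le hw hw0
      (Finset.sum_pos' (fun i _ => hw0 i) ⟨m, Finset.mem_univ m, hmpos⟩) (hsmooth 1 hone)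
  · rw [show w = fun _ => w m from funext fun i => hconst i m, funext (lorentzNorm_const (w m) q)]
    exact isSmoothNorm_weightedLpNorm hq fun _ => hmpos

end Lorentz

theorem forall_fin_add_one_iff {n : ℕ} {P : ℕ → Prop} :
    (∀ i : Fin n, P (i + 1)) ↔ ∀ i, 1 ≤ i → i ≤ n → P i := by
  refine ⟨fun h i h1 hn => ?_, fun h i => h _ (by omega) (by omega)⟩
  simpa only [Nat.sub_add_cancel h1] using h ⟨i - 1, by omega⟩

theorem antitone_fin_add_one {α : Type*} [Preorder α] {n : ℕ} {a : ℕ → α}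
    (ha : ∀ i, 1 ≤ i → i + 1 ≤ n → a (i + 1) ≤ a i) : Antitone fun i : Fin n => a (i + 1) := by
  have hanti : AntitoneOn a (Set.Icc 1 n) := antitoneOn_of_add_one_le Set.ordConnected_Icc
    fun k _ hk hk' => ha k hk.1 hk'.2
  exact fun i j hij => hanti ⟨by omega, i.isLt⟩ ⟨by omega, j.isLt⟩ (Nat.succ_le_succ hij)

/-- For `q > 1`, `n ≥ 2` and weights `a 1 ≥ … ≥ a n ≥ 0` not all zero, with
`N` the norm of `ℓ_{w,q}^n`, the weights are all equal iff `(ℝⁿ, N)` is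
smooth, i.e. every nonzero point has a unique supporting functional. -/
theorem stmt7 (n : ℕ) (hn : 2 ≤ n) (q : ℝ) (hq : 1 < q) (a : ℕ → ℝ)
    (hmono : ∀ i, 1 ≤ i → i + 1 ≤ n → a (i + 1) ≤ a i)
    (hnonneg : ∀ i, 1 ≤ i → i ≤ n → 0 ≤ a i)
    (hnz : ∃ i, 1 ≤ i ∧ i ≤ n ∧ a i ≠ 0) :
    (∀ i j, 1 ≤ i → i ≤ n → 1 ≤ j → j ≤ n → a i = a j) ↔
      (∀ x : Fin n → ℝ, x ≠ 0 →
        ∃! f : (Fin n → ℝ) →ₗ[ℝ] ℝ,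
          f x = (∑ i : Fin n, a (i.1 + 1) * dstar x i ^ q) ^ (1 / q) ∧
          ∀ y : Fin n → ℝ,
            f y ≤ (∑ i : Fin n, a (i.1 + 1) * dstar y i ^ q) ^ (1 / q)) := by
  let w : Fin n → ℝ := fun i => a (i + 1)
  have hw : Antitone w := antitone_fin_add_one hmono
  have hw0 : ∀ i, 0 ≤ w i := forall_fin_add_one_iff.mpr hnonneg
  have hne : w ≠ 0 := by
    obtain ⟨m, hm1, hmn, hm⟩ := hnz
    exact fun hzero => hm (forall_fin_add_one_iff (P := (a · = 0)).mp (congrFun hzero) m hm1 hmn)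
  have hconst : (∀ i j, 1 ≤ i → i ≤ n → 1 ≤ j → j ≤ n → a i = a j) ↔ ∀ i j, w i = w j := by
    refine ⟨fun h i j => h _ _ (by omega) (by omega) (by omega) (by omega), ?_⟩
    intro h i j hi1 hin hj1 hjn
    have hij (i' : Fin n) : a (i' + 1) = a j :=
      forall_fin_add_one_iff (P := (a (i' + 1) = a ·)).mp (h i') j hj1 hjn
    exact forall_fin_add_one_iff (P := (a · = a j)).mp hij i hi1 hin
  exact hconst.trans (isSmoothNorm_lorentzNorm_iff hq hw hw0 hne).symm
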